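/- arXiv:2603.10982 — 4 statements merged into one kernel-verified Lean document; each statement's English description precedes it below -/
import Mathlib

section
/- Let R : Multiset α, S : Multiset β, T : Multiset γ with key maps f₁ : α → κ₁, g₁ : β → κ₁, f₂ : α → κ₂, g₂ : γ → κ₂ (a star-shaped join tree with root R and children S and T). Then the two-step bag join ((R ⋈_{f₁,g₁} S) ⋈_{f₂ ∘ Prod.fst, g₂} T) equals the multiset obtained by nested-semijoin-then-flatten evaluation: (R.filter (fun a => (∃ b ∈ S, g₁ b = f₁ a) ∧ (∃ c ∈ T, g₂ c = f₂ a))).bind (fun a => ((S.filter (fun b => g₁ b = f₁ a)) ×ˢ (T.filter (fun c => g₂ c = f₂ a))).map (fun bc => ((a, bc.1), bc.2))). -/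
attribute [local instance] Multiset.decidableExistsMultiset

variable {α β γ κ₁ κ₂ : Type*}

/-- The bag (multiset) join of `R` and `S` along key maps `f` and `g`: each tuple `a ∈ R`
is paired with each of its join partners `b ∈ S` (those with `g b = f a`). -/
def bagJoin [DecidableEq κ₁] (R : Multiset α) (S : Multiset β) (f : α → κ₁) (g : β → κ₁) :
    Multiset (α × β) :=
  R.bind (fun a => (S.filter (fun b => g b = f a)).map (fun b => (a, b)))

theorem multiset_map_product_eq_bind {δ : Type*} (s : Multiset α) (t : Multiset β)
    (h : α × β → δ) : (s ×ˢ t).map h = s.bind fun a => t.map fun b => h (a, b) := by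
  simp only [SProd.sprod, Multiset.product, Multiset.map_bind, Multiset.map_map,
    Function.comp_apply]

theorem multiset_product_eq_zero {s : Multiset α} {t : Multiset β} :
    s ×ˢ t = 0 ↔ s = 0 ∨ t = 0 := by
  simp only [← Multiset.card_eq_zero, Multiset.card_product, mul_eq_zero]

theorem multiset_bind_filter_of_ne_zero {s : Multiset α} {p : α → Prop} [DecidablePred p]
    {h : α → Multiset β} (hp : ∀ a ∈ s, h a ≠ 0 → p a) : (s.filter p).bind h = s.bind h := by
  rw [Multiset.bind_filter]
  exact Multiset.bind_congr fun a ha =>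
    ite_eq_left_iff.2 fun not_p => (not_imp_comm.1 (hp a ha) not_p).symm

theorem bagJoin_bagJoin [DecidableEq κ₁] [DecidableEq κ₂]
    (R : Multiset α) (S : Multiset β) (T : Multiset γ)
    (f₁ : α → κ₁) (g₁ : β → κ₁) (f₂ : α × β → κ₂) (g₂ : γ → κ₂) :
    bagJoin (bagJoin R S f₁ g₁) T f₂ g₂ =
      R.bind fun a => (S.filter fun b => g₁ b = f₁ a).bind fun b =>
        (T.filter fun c => g₂ c = f₂ (a, b)).map fun c => ((a, b), c) := by
  simp only [bagJoin, Multiset.bind_assoc, Multiset.bind_map]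

theorem bagJoin_bagJoin_comp_fst [DecidableEq κ₁] [DecidableEq κ₂]
    (R : Multiset α) (S : Multiset β) (T : Multiset γ)
    (f₁ : α → κ₁) (g₁ : β → κ₁) (f₂ : α → κ₂) (g₂ : γ → κ₂) :
    bagJoin (bagJoin R S f₁ g₁) T (f₂ ∘ Prod.fst) g₂ =
      R.bind fun a =>
        ((S.filter fun b => g₁ b = f₁ a) ×ˢ (T.filter fun c => g₂ c = f₂ a)).map
          fun bc => ((a, bc.1), bc.2) := by
  simp only [bagJoin_bagJoin, multiset_map_product_eq_bind, Function.comp_apply]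

/-- Star join tree with root `R` and children `S`, `T`: the two-step bag join equals the
result of nested-semijoin-then-flatten evaluation, which keeps the tuples `a ∈ R` having
partners in both `S` and `T` and pairs each such `a` with every combination of a partner
from `S` and a partner from `T`. -/
theorem bagJoin_star_nested_semijoin [DecidableEq κ₁] [DecidableEq κ₂]
    (R : Multiset α) (S : Multiset β) (T : Multiset γ)
    (f₁ : α → κ₁) (g₁ : β → κ₁) (f₂ : α → κ₂) (g₂ : γ → κ₂) :
    bagJoin (bagJoin R S f₁ g₁) T (f₂ ∘ Prod.fst) g₂ =
      (R.filter (fun a => (∃ b ∈ S, g₁ b = f₁ a) ∧ (∃ c ∈ T, g₂ c = f₂ a))).bind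
        (fun a =>
          ((S.filter (fun b => g₁ b = f₁ a)) ×ˢ (T.filter (fun c => g₂ c = f₂ a))).map
            (fun bc => ((a, bc.1), bc.2))) := by
  have exists_partners : ∀ a ∈ R,
      ((S.filter fun b => g₁ b = f₁ a) ×ˢ (T.filter fun c => g₂ c = f₂ a)).map
        (fun bc => ((a, bc.1), bc.2)) ≠ 0 →
      (∃ b ∈ S, g₁ b = f₁ a) ∧ (∃ c ∈ T, g₂ c = f₂ a) := by
    intro a _ output_ne_zero
    simpa only [ne_eq, Multiset.map_eq_zero, multiset_product_eq_zero, not_or,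
      Multiset.filter_eq_nil, not_forall, not_not, exists_prop] using output_ne_zero
  rw [bagJoin_bagJoin_comp_fst, multiset_bind_filter_of_ne_zero exists_partners]
end

section
/- Let R : Multiset α, S : Multiset β, T : Multiset γ with key maps f : α → κ₁, g : β → κ₁, g' : β → κ₂, h : γ → κ₂ (a chain-shaped join tree R — S — T). Then the two-step bag join ((R ⋈_{f,g} S) ⋈_{g' ∘ Prod.snd, h} T) equals the multiset obtained by bottom-up nested-semijoin-then-flatten evaluation: letting S' = S.filter (fun b => ∃ c ∈ T, h c = g' b), it equals R.bind (fun a => (S'.filter (fun b => g b = f a)).bind (fun b => (T.filter (fun c => h c = g' b)).map (fun c => ((a, b), c)))). -/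
attribute [local instance] Multiset.decidableExistsMultiset

variable {α β γ κ₁ κ₂ : Type*}

theorem filter_bind_eq_bind_of_eq_zero (p : β → Prop) [DecidablePred p] (S : Multiset β)
    (F : β → Multiset γ) (hF : ∀ b ∈ S, ¬p b → F b = 0) : (S.filter p).bind F = S.bind F := by
  rw [Multiset.bind_filter]
  exact Multiset.bind_congr fun b hb => ite_eq_left_iff.2 fun hpb => (hF b hb hpb).symm

section Semijoin

variable [DecidableEq κ₂]

/-- The semijoin of `S` with `T` along key maps `g` and `h`: the tuples of `S`, with their
multiplicities in `S`, that have at least one join partner in `T`. -/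
def semijoin (S : Multiset β) (T : Multiset γ) (g : β → κ₂) (h : γ → κ₂) : Multiset β :=
  S.filter (fun b => ∃ c ∈ T, h c = g b)

theorem filter_semijoin (p : β → Prop) [DecidablePred p] (S : Multiset β) (T : Multiset γ)
    (g : β → κ₂) (h : γ → κ₂) :
    (semijoin S T g h).filter p = semijoin (S.filter p) T g h :=
  Multiset.filter_comm p _ S

theorem semijoin_bind_map_partners {δ : Type*} (S : Multiset β) (T : Multiset γ) (g : β → κ₂)
    (h : γ → κ₂) (φ : β → γ → δ) :
    (semijoin S T g h).bind (fun b => (T.filter (fun c => h c = g b)).map (φ b)) =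
      S.bind (fun b => (T.filter (fun c => h c = g b)).map (φ b)) := by
  refine filter_bind_eq_bind_of_eq_zero _ S _ fun b _ dangling => ?_
  have no_partner : T.filter (fun c => h c = g b) = 0 :=
    Multiset.filter_eq_nil.2 fun c hc hcb => dangling ⟨c, hc, hcb⟩
  rw [no_partner, Multiset.map_zero]

end Semijoin

theorem bagJoin_bagJoin_eq_bind [DecidableEq κ₁] [DecidableEq κ₂]
    (R : Multiset α) (S : Multiset β) (T : Multiset γ)
    (f : α → κ₁) (g : β → κ₁) (k : α × β → κ₂) (h : γ → κ₂) :
    bagJoin (bagJoin R S f g) T k h =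
      R.bind (fun a => (S.filter (fun b => g b = f a)).bind
        (fun b => (T.filter (fun c => h c = k (a, b))).map (fun c => ((a, b), c)))) := by
  simp only [bagJoin, Multiset.bind_assoc, Multiset.bind_map]

/-- Chain join tree `R — S — T`: the two-step bag join equals the result of bottom-up
nested-semijoin-then-flatten evaluation, where first the tuples of `S` having no partner
in `T` are removed (yielding `S'`), and then each `a ∈ R` is paired with every `b ∈ S'`
joining it and every `c ∈ T` joining that `b`. -/
theorem bagJoin_chain_nested_semijoin [DecidableEq κ₁] [DecidableEq κ₂]
    (R : Multiset α) (S : Multiset β) (T : Multiset γ)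
    (f : α → κ₁) (g : β → κ₁) (g' : β → κ₂) (h : γ → κ₂) :
    bagJoin (bagJoin R S f g) T (g' ∘ Prod.snd) h =
      R.bind (fun a =>
        (((S.filter (fun b => ∃ c ∈ T, h c = g' b)).filter (fun b => g b = f a)).bind
          (fun b => (T.filter (fun c => h c = g' b)).map (fun c => ((a, b), c))))) := by
  rw [bagJoin_bagJoin_eq_bind]
  refine Multiset.bind_congr fun a _ => ?_
  change _ = ((semijoin S T g' h).filter (fun b => g b = f a)).bind _
  rw [filter_semijoin]
  exact (semijoin_bind_map_partners _ T g' h fun b c => ((a, b), c)).symm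
end

section
/- Let L : List κ be a list of keys, with κ having decidable equality. For an index i < L.length define pred i to be the largest index j < i with L.get j = L.get i, if such an index exists (and 'none' otherwise). Fix a key k occurring in L and let i₀ be the largest index with L.get i₀ = k. Then the finite chain i₀, pred i₀, pred (pred i₀), … (stopping when pred is undefined) is strictly decreasing and visits exactly the set of all indices i with L.get i = k. -/
variable {κ : Type*}

/-- `c` is the pred-chain of `L` starting at `i₀`: its head is `i₀`, each element is
followed by the largest smaller index holding the same key of `L` (this is the
`pred` function realized by the `nxt` pointers), and `pred` is undefined at the last
element (no smaller index has the same key). -/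
def IsPredChain [DecidableEq κ] (L : List κ) (i₀ : ℕ) (c : List ℕ) : Prop :=
  c.head? = some i₀ ∧
  c.Chain' (fun i j => j < i ∧ L[j]? = L[i]? ∧ ∀ j', j < j' → j' < i → L[j']? ≠ L[i]?) ∧
  ∀ ℓ, c.getLast? = some ℓ → ∀ j < ℓ, L[j]? ≠ L[ℓ]?

/-!
If `j` is the previous occurrence of the value at `i`, then the occurrences of that value up to
`i` are `i` itself together with those up to `j`. Hence a list is the chain of previous occurrences
from `i` if and only if it lists the occurrences up to `i` in decreasing order, and such a list
exists as soon as there are finitely many of them.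
-/

theorem setOf_mem_cons {α : Type*} (a : α) (c : List α) :
    {x | x ∈ a :: c} = insert a {x | x ∈ c} :=
  Set.ext fun _ => List.mem_cons

section Preorder

variable {α β : Type*} [Preorder α] {f : α → β} {i j : α} {c : List α}

/-- `j` is a previous occurrence of the value `f i`; on a linear order of positions this says
`pred i = j` for the keys `f`. The argument order makes this the step relation of a chain that
descends from `i` to `j`. -/
def IsPrevOccurrence (f : α → β) (i j : α) : Prop :=
  j < i ∧ f j = f i ∧ ∀ j', j < j' → j' < i → f j' ≠ f i

/-- The chain `i, pred i, pred (pred i), …`, run until `pred` is undefined: the counterpart of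
`IsPredChain` for keys `f` on arbitrary positions. -/
def IsPrevChain (f : α → β) (i : α) (c : List α) : Prop :=
  c.head? = some i ∧ c.IsChain (IsPrevOccurrence f) ∧
    ∀ l, c.getLast? = some l → ∀ j < l, f j ≠ f l

/-- The positions up to and including `i` that carry the same value as `i`; these are the positions
that the chain of previous occurrences from `i` visits. -/
def occurrencesUpTo (f : α → β) (i : α) : Set α :=
  {j | j ≤ i ∧ f j = f i}

theorem isGreatest_occurrencesUpTo (f : α → β) (i : α) : IsGreatest (occurrencesUpTo f i) i :=
  ⟨⟨le_rfl, rfl⟩, fun _ => And.left⟩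

theorem occurrencesUpTo_inter_Iic (h : j ∈ occurrencesUpTo f i) :
    occurrencesUpTo f i ∩ Set.Iic j = occurrencesUpTo f j :=
  Set.ext fun _ => ⟨fun ⟨⟨_, hx⟩, hxj⟩ => ⟨hxj, hx.trans h.2.symm⟩,
    fun ⟨hxj, hx⟩ => ⟨⟨hxj.trans h.1, hx.trans h.2⟩, hxj⟩⟩

theorem finite_occurrencesUpTo [LocallyFiniteOrderBot α] (f : α → β) (i : α) :
    (occurrencesUpTo f i).Finite :=
  (Set.finite_Iic i).subset fun _ => And.left

theorem isPrevChain_singleton {a : α} :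
    IsPrevChain f i [a] ↔ a = i ∧ ∀ j < a, f j ≠ f a := by
  simp [IsPrevChain]

theorem isPrevChain_cons_cons {a b : α} :
    IsPrevChain f i (a :: b :: c) ↔
      a = i ∧ IsPrevOccurrence f a b ∧ IsPrevChain f b (b :: c) := by
  simp [IsPrevChain, and_assoc]

theorem isGreatest_setOf_mem_cons {a : α} (h : (a :: c).IsChain (· > ·)) :
    IsGreatest {x | x ∈ a :: c} a :=
  ⟨List.mem_cons_self, fun _ hx => (List.mem_cons.1 hx).elim le_of_eq fun hx =>
    (List.rel_of_pairwise_cons (List.isChain_iff_pairwise.1 h) hx).le⟩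

theorem setOf_mem_cons_cons_inter_Iic {a b : α} (h : (a :: b :: c).IsChain (· > ·)) :
    {x | x ∈ a :: b :: c} ∩ Set.Iic b = {x | x ∈ b :: c} := by
  obtain ⟨hba, hbc⟩ := List.isChain_cons_cons.1 h
  refine Set.ext fun x => ⟨fun ⟨hx, hxb⟩ => ?_, fun hx => ?_⟩
  · exact (List.mem_cons.1 hx).resolve_left (hxb.trans_lt hba).ne
  · exact ⟨List.mem_cons_of_mem a hx, (isGreatest_setOf_mem_cons hbc).2 hx⟩

end Preorder

section PartialOrder

variable {α β : Type*} [PartialOrder α] {f : α → β} {i : α} {c : List α}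

theorem occurrencesUpTo_eq_singleton_iff :
    occurrencesUpTo f i = {i} ↔ ∀ j < i, f j ≠ f i := by
  rw [Set.eq_singleton_iff_unique_mem, and_iff_right (isGreatest_occurrencesUpTo f i).1]
  exact ⟨fun h j hj hf => hj.ne (h j ⟨hj.le, hf⟩),
    fun h j hj => hj.1.eq_of_not_lt fun hlt => h j hlt hj.2⟩

theorem eq_of_setOf_mem_cons_eq_occurrencesUpTo {a : α} (hgt : (a :: c).IsChain (· > ·))
    (hocc : {x | x ∈ a :: c} = occurrencesUpTo f i) : a = i :=
  (isGreatest_setOf_mem_cons hgt).unique (hocc ▸ isGreatest_occurrencesUpTo f i)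

end PartialOrder

section LinearOrder

variable {α β : Type*} [LinearOrder α] {f : α → β} {i j : α} {c : List α}

theorem occurrencesUpTo_eq_preimage {k : β} (hi : f i = k) (hlast : ∀ j, i < j → f j ≠ k) :
    occurrencesUpTo f i = f ⁻¹' {k} :=
  Set.ext fun j => ⟨fun hj => hj.2.trans hi,
    fun hj => ⟨not_lt.1 fun hij => hlast j hij hj, hj.trans hi.symm⟩⟩

theorem isPrevOccurrence_iff_occurrencesUpTo_eq_insert :
    IsPrevOccurrence f i j ↔
      j < i ∧ occurrencesUpTo f i = insert i (occurrencesUpTo f j) := by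
  constructor
  · rintro ⟨hji, hf, hgap⟩
    refine ⟨hji, Set.ext fun x => ⟨fun ⟨hxi, hx⟩ => ?_, ?_⟩⟩
    · rcases hxi.eq_or_lt with rfl | hxi
      · exact Or.inl rfl
      · exact Or.inr ⟨not_lt.1 fun hjx => hgap x hjx hxi hx, hx.trans hf.symm⟩
    · rintro (rfl | ⟨hxj, hx⟩)
      · exact (isGreatest_occurrencesUpTo f x).1
      · exact ⟨hxj.trans hji.le, hx.trans hf⟩
  · rintro ⟨hji, hocc⟩
    have hj : j ∈ occurrencesUpTo f i := hocc ▸ Or.inr (isGreatest_occurrencesUpTo f j).1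
    refine ⟨hji, hj.2, fun x hjx hxi hx => ?_⟩
    have hx' : x ∈ insert i (occurrencesUpTo f j) := hocc ▸ ⟨hxi.le, hx⟩
    exact hx'.elim hxi.ne fun hxj => hjx.not_ge hxj.1

theorem isPrevChain_iff_isChain_gt_and_setOf_mem_eq :
    IsPrevChain f i c ↔ c.IsChain (· > ·) ∧ {j | j ∈ c} = occurrencesUpTo f i := by
  induction c generalizing i with
  | nil =>
    have hne : (∅ : Set α) ≠ occurrencesUpTo f i :=
      (isGreatest_occurrencesUpTo f i).nonempty.ne_empty.symm
    simpa [IsPrevChain] using hne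
  | cons a t ih =>
    cases t with
    | nil =>
      rw [isPrevChain_singleton, ← occurrencesUpTo_eq_singleton_iff]
      constructor
      · rintro ⟨rfl, hocc⟩
        exact ⟨List.isChain_singleton a, by simp [hocc]⟩
      · rintro ⟨hgt, hocc⟩
        obtain rfl := eq_of_setOf_mem_cons_eq_occurrencesUpTo hgt hocc
        exact ⟨rfl, by simp [← hocc]⟩
    | cons b t =>
      rw [isPrevChain_cons_cons, ih, isPrevOccurrence_iff_occurrencesUpTo_eq_insert]
      constructor
      · rintro ⟨rfl, ⟨hba, hocc⟩, hgt, hocc_b⟩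
        exact ⟨List.isChain_cons_cons.2 ⟨hba, hgt⟩, by rw [setOf_mem_cons, hocc_b, hocc]⟩
      · rintro ⟨hgt, hocc⟩
        obtain rfl := eq_of_setOf_mem_cons_eq_occurrencesUpTo hgt hocc
        obtain ⟨hba, hgt_b⟩ := List.isChain_cons_cons.1 hgt
        have hb : b ∈ occurrencesUpTo f a := hocc ▸ by simp
        have hocc_b : {j | j ∈ b :: t} = occurrencesUpTo f b := by
          rw [← setOf_mem_cons_cons_inter_Iic hgt, hocc, occurrencesUpTo_inter_Iic hb]
        exact ⟨rfl, ⟨hba, by rw [← hocc, setOf_mem_cons, hocc_b]⟩, hgt_b, hocc_b⟩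

theorem exists_isPrevChain (hfin : (occurrencesUpTo f i).Finite) : ∃ c, IsPrevChain f i c :=
  ⟨hfin.toFinset.sort (· ≥ ·),
    isPrevChain_iff_isChain_gt_and_setOf_mem_eq.2 ⟨(Finset.sortedGT_sort _).isChain, by simp⟩⟩

theorem predChain_visits_key_positions_general (hfin : (occurrencesUpTo f i).Finite) :
    (∃ c, IsPrevChain f i c) ∧
      ∀ c, IsPrevChain f i c → c.IsChain (· > ·) ∧ {j | j ∈ c} = occurrencesUpTo f i :=
  ⟨exists_isPrevChain hfin, fun _ => isPrevChain_iff_isChain_gt_and_setOf_mem_eq.1⟩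

end LinearOrder

/-- Correctness of the per-key linked lists of the chained shredded representation:
if `i₀` is the largest index at which key `k` occurs in `L`, then the chain
`i₀, pred i₀, pred (pred i₀), …` (stopping when `pred` is undefined) exists, is
strictly decreasing, and visits exactly the set of all indices `i` with `L.get i = k`. -/
theorem predChain_visits_key_positions [DecidableEq κ] (L : List κ) (k : κ) (i₀ : ℕ)
    (h₀ : L[i₀]? = some k) (hmax : ∀ i, i₀ < i → L[i]? ≠ some k) :
    (∃ c : List ℕ, IsPredChain L i₀ c) ∧
    ∀ c : List ℕ, IsPredChain L i₀ c →
      c.Chain' (· > ·) ∧ ∀ i : ℕ, i ∈ c ↔ L[i]? = some k :=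
  (predChain_visits_key_positions_general (finite_occurrencesUpTo (L[·]?) i₀)).imp_right
    fun h c hc => (h c hc).imp_right
      fun hmem => Set.ext_iff.1 (hmem.trans (occurrencesUpTo_eq_preimage h₀ hmax))
end

section
/- Let p : ℝ with 0 < p < 1, and let μ be the uniform probability measure on the interval (0,1) ⊆ ℝ (Lebesgue measure restricted to (0,1)). Then the pushforward of μ under the map u ↦ (⌊Real.log u / Real.log (1 − p)⌋).toNat is the geometric distribution with parameter p: for every k : ℕ, the pushforward measure of the singleton {k} equals ENNReal.ofReal (p · (1 − p)^k). -/
open MeasureTheory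

/-!
For `0 < b < 1` the function `Real.logb b` is decreasing and sends `b ^ n` to `n`, so on `(0, 1]`
its integer part equals `n` exactly on the interval `(b ^ (n + 1), b ^ n]`, whose length is
`(1 - b) * b ^ n`. Here `b = 1 - p`. Adding the null point `1` to `(0, 1)` lets the case `n = 0`,
where the interval contains `1`, be treated like the others.
-/

section NatFloorLogb

variable {b x : ℝ}

theorem natFloor_logb_eq_iff_of_base_lt_one (hb₀ : 0 < b) (hb₁ : b < 1) (hx : x ∈ Set.Ioc 0 1)
    (n : ℕ) : ⌊Real.logb b x⌋₊ = n ↔ x ∈ Set.Ioc (b ^ (n + 1)) (b ^ n) := by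
  obtain ⟨hx₀, hx₁⟩ := hx
  have le_logb_iff : (n : ℝ) ≤ Real.logb b x ↔ x ≤ b ^ n := by
    rw [Real.le_logb_iff_rpow_le_of_base_lt_one hb₀ hb₁ hx₀, Real.rpow_natCast]
  have logb_lt_iff : Real.logb b x < n + 1 ↔ b ^ (n + 1) < x := by
    rw [Real.logb_lt_iff_lt_rpow_of_base_lt_one hb₀ hb₁ hx₀, ← Nat.cast_succ, Real.rpow_natCast]
  rw [Nat.floor_eq_iff (Real.logb_nonneg_of_base_lt_one hb₀ hb₁ hx₀ hx₁), le_logb_iff,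
    logb_lt_iff, Set.mem_Ioc, and_comm]

theorem natFloor_logb_preimage_singleton_inter_Ioc (hb₀ : 0 < b) (hb₁ : b < 1) (n : ℕ) :
    (fun x ↦ ⌊Real.logb b x⌋₊) ⁻¹' {n} ∩ Set.Ioc 0 1 = Set.Ioc (b ^ (n + 1)) (b ^ n) := by
  have hsub : Set.Ioc (b ^ (n + 1)) (b ^ n) ⊆ Set.Ioc 0 1 :=
    Set.Ioc_subset_Ioc (by positivity) (pow_le_one₀ hb₀.le hb₁.le)
  ext x
  constructor
  · rintro ⟨hfloor, hx⟩
    exact (natFloor_logb_eq_iff_of_base_lt_one hb₀ hb₁ hx n).1 hfloor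
  · intro hx
    exact ⟨(natFloor_logb_eq_iff_of_base_lt_one hb₀ hb₁ (hsub hx) n).2 hx, hsub hx⟩

theorem measurable_natFloor_logb (b : ℝ) : Measurable fun x ↦ ⌊Real.logb b x⌋₊ :=
  (Real.measurable_log.div_const (Real.log b)).nat_floor

theorem map_natFloor_logb_restrict_Ioc_singleton (μ : Measure ℝ) (hb₀ : 0 < b) (hb₁ : b < 1)
    (n : ℕ) : (μ.restrict (Set.Ioc 0 1)).map (fun x ↦ ⌊Real.logb b x⌋₊) {n} =
      μ (Set.Ioc (b ^ (n + 1)) (b ^ n)) := by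
  have hmeas := measurable_natFloor_logb b
  have hsingleton := measurableSet_singleton n
  rw [Measure.map_apply hmeas hsingleton, Measure.restrict_apply (hmeas hsingleton),
    natFloor_logb_preimage_singleton_inter_Ioc hb₀ hb₁]

end NatFloorLogb

/-- Correctness of `DrawGeom`: the pushforward of the uniform probability measure on the
interval `(0,1)` under `u ↦ ⌊log u / log (1 - p)⌋.toNat` is the geometric distribution
with parameter `p`, i.e. it assigns probability `p * (1 - p)^k` to each `k : ℕ`. -/
theorem map_uniform_floor_log_eq_geometric (p : ℝ) (hp0 : 0 < p) (hp1 : p < 1) (k : ℕ) :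
    (volume.restrict (Set.Ioo (0 : ℝ) 1)).map
        (fun u => (⌊Real.log u / Real.log (1 - p)⌋).toNat) {k} =
      ENNReal.ofReal (p * (1 - p) ^ k) := by
  have hlength : (1 - p) ^ k - (1 - p) ^ (k + 1) = p * (1 - p) ^ k := by ring
  simp only [Real.log_div_log, Int.floor_toNat]
  rw [restrict_Ioo_eq_restrict_Ioc,
    map_natFloor_logb_restrict_Ioc_singleton volume (sub_pos.2 hp1) (sub_lt_self 1 hp0),
    Real.volume_Ioc, hlength]
end
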